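/- arXiv:1809.00772 — 2 statements merged into one kernel-verified Lean document; each statement's English description precedes it below -/
import Mathlib

section
/- Let L be a dcpo-∨↑-semilattice and A ⊆ L. Then A is F-⋁-existing if and only if its F-Scott closure cl_F(A) is F-⋁-existing. -/
/-!
A homomorphism `f : L → M` has, for each `b : M`, an F-Scott closed sublevel set `{x | f x ≤ b}`:
finite consistent suprema in `L` are iterated suprema of consistent pairs, which `f` preserves.
Hence every upper bound of `f '' A` is an upper bound of `f '' fScottClosure A`, so the two images
have the same upper bounds, and one has a supremum exactly when the other does.
-/

universe u v

/-- A *dcpo*: a partial order in which every nonempty directed subset has a least upper bound. -/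
def IsDcpo (P : Type*) [PartialOrder P] : Prop :=
  ∀ d : Set P, d.Nonempty → DirectedOn (· ≤ ·) d → ∃ a, IsLUB d a

/-- A *dcpo-∨↑-semilattice*: a dcpo in which every consistent pair of elements
(i.e. pair with an upper bound) has a least upper bound. -/
def IsDcpoVSemilattice (L : Type*) [PartialOrder L] : Prop :=
  IsDcpo L ∧ ∀ x y : L, BddAbove ({x, y} : Set L) → ∃ a, IsLUB ({x, y} : Set L) a

/-- Scott continuity: `f` maps least upper bounds of nonempty directed sets to
least upper bounds of the images. -/
def IsScottContinuous {P : Type*} {L : Type*} [PartialOrder P] [PartialOrder L]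
    (f : P → L) : Prop :=
  ∀ d : Set P, d.Nonempty → DirectedOn (· ≤ ·) d → ∀ a, IsLUB d a → IsLUB (f '' d) (f a)

/-- A *Scott closed* set: a lower set closed under least upper bounds of its
nonempty directed subsets. -/
def IsScottClosed {P : Type*} [PartialOrder P] (A : Set P) : Prop :=
  IsLowerSet A ∧ ∀ d : Set P, d ⊆ A → d.Nonempty → DirectedOn (· ≤ ·) d →
    ∀ a, IsLUB d a → a ∈ A

/-- The Scott closure of a set: the smallest Scott closed set containing it. -/
def scottClosure {P : Type*} [PartialOrder P] (A : Set P) : Set P :=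
  ⋂₀ {C | IsScottClosed C ∧ A ⊆ C}

/-- A subset `A` of a dcpo `P` is *⋁-existing* if for every Scott continuous map `f`
into an arbitrary dcpo-∨↑-semilattice `L`, the supremum of `f '' A` exists in `L`. -/
def SupExisting {P : Type u} [PartialOrder P] (A : Set P) : Prop :=
  ∀ (L : Type v) [PartialOrder L], IsDcpoVSemilattice L →
    ∀ f : P → L, IsScottContinuous f → ∃ a, IsLUB (f '' A) a

/-- An *F-Scott closed* set: a Scott closed set containing the least upper bound of
each of its nonempty finite consistent subsets. -/
def IsFScottClosed {L : Type*} [PartialOrder L] (A : Set L) : Prop :=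
  IsScottClosed A ∧ ∀ F : Set L, F ⊆ A → F.Nonempty → F.Finite → BddAbove F →
    ∀ a, IsLUB F a → a ∈ A

/-- The F-Scott closure of a set: the intersection of all F-Scott closed sets containing it. -/
def fScottClosure {L : Type*} [PartialOrder L] (A : Set L) : Set L :=
  ⋂₀ {C | IsFScottClosed C ∧ A ⊆ C}

/-- A *dcpo-∨↑-semilattice homomorphism*: maps least upper bounds of nonempty directed
sets and of consistent pairs to the least upper bounds of the images. -/
def IsSemilatticeHom {L : Type*} {M : Type*} [PartialOrder L] [PartialOrder M]
    (f : L → M) : Prop :=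
  (∀ d : Set L, d.Nonempty → DirectedOn (· ≤ ·) d → ∀ a, IsLUB d a → IsLUB (f '' d) (f a)) ∧
  (∀ x y : L, BddAbove ({x, y} : Set L) → ∀ a, IsLUB ({x, y} : Set L) a →
    IsLUB (f '' ({x, y} : Set L)) (f a))

/-- A subset `A` of a dcpo-∨↑-semilattice `L` is *F-⋁-existing* if for every
dcpo-∨↑-semilattice homomorphism `f` into an arbitrary dcpo-∨↑-semilattice `M`,
the supremum of `f '' A` exists in `M`. -/
def FSupExisting {L : Type u} [PartialOrder L] (A : Set L) : Prop :=
  ∀ (M : Type v) [PartialOrder M], IsDcpoVSemilattice M →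
    ∀ f : L → M, IsSemilatticeHom f → ∃ a, IsLUB (f '' A) a

/-- `P^∨`: the family of all ⋁-existing Scott closed subsets of `P`, ordered by inclusion. -/
abbrev Pvee (P : Type u) [PartialOrder P] : Type u :=
  {A : Set P // IsScottClosed A ∧ SupExisting.{u, u} A}

theorem isScottClosed_principal {P : Type u} [PartialOrder P] (x : P) :
    IsScottClosed (Set.Iic x) := by
  constructor
  · intro a b hba ha
    exact le_trans hba ha
  · intro d hd _ _ a ha
    exact ha.2 fun y hy => hd hy

theorem supExisting_principal {P : Type u} [PartialOrder P] (x : P) :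
    SupExisting.{u, v} (Set.Iic x) := by
  intro L _ _ f hf
  have hdir : DirectedOn (· ≤ ·) (Set.Iic x) := by
    intro a ha b hb
    exact ⟨x, le_refl x, ha, hb⟩
  exact ⟨f x, hf (Set.Iic x) ⟨x, Set.mem_Iic.2 (le_refl x)⟩ hdir x isLUB_Iic⟩

/-- The embedding `j` of `P` into `P^∨`, sending `x` to the principal ideal `↓x`. -/
def jmap {P : Type u} [PartialOrder P] (x : P) : Pvee P :=
  ⟨Set.Iic x, isScottClosed_principal x, supExisting_principal.{u, u} x⟩

theorem IsSemilatticeHom.monotone {L : Type*} {M : Type*} [PartialOrder L] [PartialOrder M]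
    {f : L → M} (hf : IsSemilatticeHom f) : Monotone f := by
  intro x y hxy
  have hlub : IsLUB ({x, y} : Set L) y :=
    ⟨by rintro z (rfl | rfl); exacts [hxy, le_rfl], fun z hz => hz (by simp)⟩
  exact (hf.2 x y ⟨y, hlub.1⟩ y hlub).1 ⟨x, by simp, rfl⟩

/-- Existence of the supremum is part of the conclusion, since the induction forms the supremum of
a new element with the supremum obtained so far. -/
theorem exists_isLUB_map_le_of_finite {L : Type*} {M : Type*} [PartialOrder L] [PartialOrder M]
    (hL : IsDcpoVSemilattice L) {f : L → M} (hf : IsSemilatticeHom f) (b : M)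
    {F : Set L} (hfin : F.Finite) (hne : F.Nonempty) (hbdd : BddAbove F)
    (hle : ∀ x ∈ F, f x ≤ b) : ∃ a, IsLUB F a ∧ f a ≤ b := by
  induction F, hfin using Set.Finite.induction_on with
  | empty => exact absurd hne Set.not_nonempty_empty
  | @insert x s _ _ ih =>
    rcases s.eq_empty_or_nonempty with rfl | hs
    · exact ⟨x, by simp, hle x (by simp)⟩
    · obtain ⟨a, ha, hab⟩ := ih hs (hbdd.mono (Set.subset_insert x s))
        fun y hy => hle y (Set.mem_insert_of_mem x hy)
      obtain ⟨u, hu⟩ := hbdd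
      have hpair : BddAbove ({x, a} : Set L) := by
        refine ⟨u, ?_⟩
        rintro z (rfl | rfl)
        · exact hu (Set.mem_insert _ _)
        · exact ha.2 fun y hy => hu (Set.mem_insert_of_mem x hy)
      obtain ⟨c, hc⟩ := hL.2 x a hpair
      refine ⟨c, ⟨?_, ?_⟩, ?_⟩
      · rintro z (rfl | hz)
        · exact hc.1 (by simp)
        · exact (ha.1 hz).trans (hc.1 (by simp))
      · intro w hw
        refine hc.2 ?_
        rintro z (rfl | rfl)
        · exact hw (Set.mem_insert _ _)
        · exact ha.2 fun y hy => hw (Set.mem_insert_of_mem x hy)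
      · refine (hf.2 x a hpair c hc).2 ?_
        rintro _ ⟨z, rfl | rfl, rfl⟩
        · exact hle _ (Set.mem_insert _ _)
        · exact hab

theorem isFScottClosed_setOf_map_le {L : Type*} {M : Type*} [PartialOrder L] [PartialOrder M]
    (hL : IsDcpoVSemilattice L) {f : L → M} (hf : IsSemilatticeHom f) (b : M) :
    IsFScottClosed {x | f x ≤ b} := by
  refine ⟨⟨fun x y hyx hx => (hf.monotone hyx).trans hx, ?_⟩, ?_⟩
  · intro d hd hne hdir a ha
    refine (hf.1 d hne hdir a ha).2 ?_
    rintro _ ⟨x, hx, rfl⟩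
    exact hd hx
  · intro F hF hne hfin hbdd a ha
    obtain ⟨c, hc, hcb⟩ := exists_isLUB_map_le_of_finite hL hf b hfin hne hbdd fun x hx => hF hx
    rwa [ha.unique hc]

theorem upperBounds_image_fScottClosure {L : Type*} {M : Type*} [PartialOrder L] [PartialOrder M]
    (hL : IsDcpoVSemilattice L) {f : L → M} (hf : IsSemilatticeHom f) (A : Set L) :
    upperBounds (f '' fScottClosure A) = upperBounds (f '' A) := by
  refine Set.Subset.antisymm
    (upperBounds_mono_set (Set.image_mono (Set.subset_sInter fun C hC => hC.2))) ?_
  rintro b hb _ ⟨x, hx, rfl⟩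
  exact hx {y | f y ≤ b} ⟨isFScottClosed_setOf_map_le hL hf b, fun y hy => hb ⟨y, hy, rfl⟩⟩

/-- In a dcpo-∨↑-semilattice, a subset `A` is F-⋁-existing iff its F-Scott
closure is. -/
theorem fSupExisting_iff_fScottClosure {L : Type u} [PartialOrder L]
    (hL : IsDcpoVSemilattice L) (A : Set L) :
    FSupExisting.{u, v} A ↔ FSupExisting.{u, v} (fScottClosure A) := by
  constructor <;> intro h M _ hM f hf <;>
    simpa only [IsLUB, upperBounds_image_fScottClosure hL hf] using h M hM f hf
end

section
/- Let P be a dcpo and A ⊆ P. Then A is ⋁-existing if and only if j(A) = {↓a : a ∈ A} is an F-⋁-existing subset of P^∨; here a function g from P^∨ to a dcpo-∨↑-semilattice M is called a homomorphism if whenever a nonempty directed family in P^∨ (respectively, a consistent pair in P^∨) has a least upper bound S in P^∨, then g(S) is the least upper bound of the image of that family under g, and j(A) is F-⋁-existing means that for every such homomorphism g into an arbitrary dcpo-∨↑-semilattice M, the supremum of g(j(A)) exists in M. -/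
/-!
The map `j : P → P^∨` is Scott continuous, so a homomorphism `g` out of `P^∨` restricts to a Scott
continuous map `g ∘ j` on `P`; this gives the forward direction.

For the converse, every Scott continuous `f : P → L` into a dcpo-∨↑-semilattice factors as
`f = g ∘ j` with `g B = ⋁ f(B)` (`supExt`), so it is enough that `g` is a homomorphism.
Since `f ⁻¹' ↓u` is Scott closed, `f(X)` and `f(cl X)` have the same upper bounds. Hence the Scott
closure of a ⋁-existing set lies in `P^∨`, and if the union of a family `ℬ` in `P^∨` is ⋁-existing,
then a least upper bound of `ℬ` is contained in the closure of this union and is preserved by `g`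
(`isLUB_supExt`). The union is ⋁-existing for a directed `ℬ` because the suprema `⋁ f(B)` are
directed in `L`, and for a consistent pair because these suprema are again a consistent pair.
-/

universe u v

section

variable {P : Type u} [PartialOrder P]

theorem IsScottContinuous.mono {L : Type v} [PartialOrder L] {f : P → L}
    (hf : IsScottContinuous f) : Monotone f := by
  intro x y hxy
  have hdir : DirectedOn (· ≤ ·) (Set.Iic y) := fun a ha b hb => ⟨y, le_refl y, ha, hb⟩
  exact (hf (Set.Iic y) ⟨y, le_refl y⟩ hdir y isLUB_Iic).1 ⟨x, hxy, rfl⟩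

theorem IsScottContinuous.isScottClosed_preimage_Iic {L : Type v} [PartialOrder L] {f : P → L}
    (hf : IsScottContinuous f) (u : L) : IsScottClosed (f ⁻¹' Set.Iic u) := by
  refine ⟨fun a b hba ha => (hf.mono hba).trans ha, fun d hd hne hdir a ha => ?_⟩
  refine (hf d hne hdir a ha).2 ?_
  rintro _ ⟨x, hx, rfl⟩
  exact hd hx

theorem subset_scottClosure (X : Set P) : X ⊆ scottClosure X :=
  fun _ hx _ hC => hC.2 hx

theorem scottClosure_subset {X C : Set P} (hC : IsScottClosed C) (h : X ⊆ C) :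
    scottClosure X ⊆ C :=
  fun _ hx => hx C ⟨hC, h⟩

theorem isScottClosed_scottClosure (X : Set P) : IsScottClosed (scottClosure X) :=
  ⟨fun _ _ hba ha C hC => hC.1.1 hba (ha C hC),
    fun d hd hne hdir a ha C hC => hC.1.2 d (fun _ hx => hd hx C hC) hne hdir a ha⟩

theorem upperBounds_image_scottClosure {L : Type v} [PartialOrder L] {f : P → L}
    (hf : IsScottContinuous f) (X : Set P) :
    upperBounds (f '' scottClosure X) = upperBounds (f '' X) := by
  refine Set.Subset.antisymm
    (upperBounds_mono_set (Set.image_mono (subset_scottClosure X))) fun u hu => ?_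
  rintro _ ⟨x, hx, rfl⟩
  exact scottClosure_subset (hf.isScottClosed_preimage_Iic u) (fun y hy => hu ⟨y, hy, rfl⟩) hx

theorem SupExisting.scottClosure {X : Set P} (hX : SupExisting.{u, v} X) :
    SupExisting.{u, v} (scottClosure X) := by
  intro L _ hL f hf
  obtain ⟨a, ha⟩ := hX L hL f hf
  refine ⟨a, ?_⟩
  unfold IsLUB
  rw [upperBounds_image_scottClosure hf]
  exact ha

theorem isScottContinuous_jmap : IsScottContinuous (jmap : P → Pvee P) := by
  intro d hne hdir a ha
  constructor
  · rintro _ ⟨x, hx, rfl⟩ y hy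
    exact le_trans hy (ha.1 hx)
  · intro C hC y hy
    refine C.2.1.1 hy (C.2.1.2 d (fun x hx => ?_) hne hdir a ha)
    exact hC ⟨x, hx, rfl⟩ (le_refl x)

/-- The extension of a Scott continuous `f : P → L` along `j`, sending `B ∈ P^∨` to the supremum
of `f(B)`. -/
noncomputable def supExt {L : Type u} [PartialOrder L] (hL : IsDcpoVSemilattice L) {f : P → L}
    (hf : IsScottContinuous f) (B : Pvee P) : L :=
  (B.2.2 L hL f hf).choose

section

variable {L : Type u} [PartialOrder L] (hL : IsDcpoVSemilattice L) {f : P → L}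
  (hf : IsScottContinuous f)

theorem supExt_spec (B : Pvee P) : IsLUB (f '' B.1) (supExt hL hf B) :=
  (B.2.2 L hL f hf).choose_spec

theorem supExt_mono : Monotone (supExt hL hf) := by
  intro B C hBC
  exact (supExt_spec hL hf B).mono (supExt_spec hL hf C) (Set.image_mono hBC)

theorem supExt_jmap (x : P) : supExt hL hf (jmap x) = f x := by
  refine (supExt_spec hL hf (jmap x)).unique ⟨?_, fun u hu => hu ⟨x, le_refl x, rfl⟩⟩
  rintro _ ⟨y, hy, rfl⟩
  exact hf.mono hy

theorem upperBounds_supExt (ℬ : Set (Pvee P)) :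
    upperBounds (supExt hL hf '' ℬ) = upperBounds (f '' ⋃ B ∈ ℬ, B.1) := by
  ext u
  constructor
  · rintro hu _ ⟨x, hx, rfl⟩
    obtain ⟨B, hB, hxB⟩ := Set.mem_iUnion₂.1 hx
    exact ((supExt_spec hL hf B).1 ⟨x, hxB, rfl⟩).trans (hu ⟨B, hB, rfl⟩)
  · rintro hu _ ⟨B, hB, rfl⟩
    refine (supExt_spec hL hf B).2 ?_
    rintro _ ⟨x, hx, rfl⟩
    exact hu ⟨x, Set.mem_iUnion₂.2 ⟨B, hB, hx⟩, rfl⟩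

end

/-- The union of a family in `P^∨` is ⋁-existing as soon as the suprema `⋁ f(B)` over its members
always have a supremum. -/
theorem supExisting_iUnion {ℬ : Set (Pvee P)}
    (h : ∀ (L : Type u) [PartialOrder L] (hL : IsDcpoVSemilattice L) (f : P → L)
      (hf : IsScottContinuous f), ∃ a, IsLUB (supExt hL hf '' ℬ) a) :
    SupExisting.{u, u} (⋃ B ∈ ℬ, B.1) := by
  intro L _ hL f hf
  obtain ⟨a, ha⟩ := h L hL f hf
  refine ⟨a, ?_⟩
  unfold IsLUB at ha ⊢
  rwa [upperBounds_supExt] at ha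

/-- `supExt` preserves the least upper bound of a family whose union is ⋁-existing: the closure of
the union is then itself an upper bound of the family in `P^∨`. -/
theorem isLUB_supExt {ℬ : Set (Pvee P)} (hℬ : SupExisting.{u, u} (⋃ B ∈ ℬ, B.1)) {S : Pvee P}
    (hS : IsLUB ℬ S) {L : Type u} [PartialOrder L] (hL : IsDcpoVSemilattice L) {f : P → L}
    (hf : IsScottContinuous f) : IsLUB (supExt hL hf '' ℬ) (supExt hL hf S) := by
  refine ⟨(supExt_mono hL hf).mem_upperBounds_image hS.1, fun u hu => ?_⟩
  rw [upperBounds_supExt, ← upperBounds_image_scottClosure hf] at hu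
  have hle : S ≤ (⟨_, isScottClosed_scottClosure _, hℬ.scottClosure⟩ : Pvee P) :=
    hS.2 fun B hB x hx => subset_scottClosure _ (Set.mem_iUnion₂.2 ⟨B, hB, hx⟩)
  exact (supExt_spec hL hf S).2 (upperBounds_mono_set (Set.image_mono hle) hu)

theorem isSemilatticeHom_supExt {L : Type u} [PartialOrder L] (hL : IsDcpoVSemilattice L)
    {f : P → L} (hf : IsScottContinuous f) : IsSemilatticeHom (supExt hL hf) := by
  constructor
  · intro ℬ hne hdir S hS
    refine isLUB_supExt (supExisting_iUnion fun M _ hM g hg => ?_) hS hL hf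
    refine hM.1 _ (hne.image _) ?_
    rintro _ ⟨B, hB, rfl⟩ _ ⟨C, hC, rfl⟩
    obtain ⟨D, hD, hBD, hCD⟩ := hdir B hB C hC
    exact ⟨_, ⟨D, hD, rfl⟩, supExt_mono hM hg hBD, supExt_mono hM hg hCD⟩
  · intro B C hbdd S hS
    refine isLUB_supExt (supExisting_iUnion fun M _ hM g hg => ?_) hS hL hf
    have hb := (supExt_mono hM hg).map_bddAbove hbdd
    rw [Set.image_pair] at hb ⊢
    exact hM.2 _ _ hb

end

/-- A subset `A` of a dcpo `P` is ⋁-existing iff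
`j(A) = {↓a : a ∈ A}` is an F-⋁-existing subset of `P^∨`. -/
theorem supExisting_iff_fSupExisting_jmap {P : Type u} [PartialOrder P] (hP : IsDcpo P)
    (A : Set P) :
    SupExisting.{u, u} A ↔ FSupExisting.{u, u} (jmap '' A : Set (Pvee P)) := by
  constructor
  · intro hA M _ hM g hg
    have hgj : IsScottContinuous (fun x => g (jmap x)) := by
      intro d hne hdir a ha
      have hdir' : DirectedOn (· ≤ ·) (jmap '' d) := by
        rintro _ ⟨x, hx, rfl⟩ _ ⟨y, hy, rfl⟩
        obtain ⟨z, hz, hxz, hyz⟩ := hdir x hx y hy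
        exact ⟨_, ⟨z, hz, rfl⟩, isScottContinuous_jmap.mono hxz, isScottContinuous_jmap.mono hyz⟩
      have h := hg.1 (jmap '' d) (hne.image _) hdir' _ (isScottContinuous_jmap d hne hdir a ha)
      rwa [Set.image_image] at h
    rw [Set.image_image]
    exact hA M hM _ hgj
  · intro hA L _ hL f hf
    have h := hA L hL (supExt hL hf) (isSemilatticeHom_supExt hL hf)
    simpa only [Set.image_image, supExt_jmap] using h
end
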